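/- Let G be a rectifiable space with rectification φ, right neutral element e, and operations p = π₂ ∘ φ⁻¹ and q = π₂ ∘ φ. For every subset A of G there exists a subset H of G with A ⊆ H, e ∈ H, p(H × H) ⊆ H and q(H × H) ⊆ H (so H is a rectifiable subspace of G); moreover, if A with the subspace topology is a Lindelöf Σ-space, then H can be chosen so that H with the subspace topology is a Lindelöf Σ-space. -/

import Mathlib

/-!
Lindelöf Σ-spaces are stable under finite products, continuous images and countable unions, the
last because a disjoint sum of perfect maps is perfect. The hull is the increasing union of the
sets obtained from `A ∪ {e}` by repeatedly adjoining all values of `p` and `q`, and each of these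
sets is built from the preceding one by the operations just listed.
-/

open Set Function TopologicalSpace

universe u

/-- A map between topological spaces is *perfect* if it is continuous, closed, and
every fiber is compact. -/
def PerfectMap {Y : Type*} {Z : Type*} [TopologicalSpace Y] [TopologicalSpace Z]
    (f : Y → Z) : Prop :=
  Continuous f ∧ IsClosedMap f ∧ ∀ z : Z, IsCompact (f ⁻¹' {z})

/-- A topological space `X` is a *Lindelöf Σ-space* if there exist a topological space `Y`,
a continuous surjection from `Y` onto `X`, and a perfect surjection from `Y` onto some
second-countable space. -/
def IsLindelofSigma (X : Type u) [TopologicalSpace X] : Prop :=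
  ∃ (Y : Type u) (tY : TopologicalSpace Y) (Z : Type u) (tZ : TopologicalSpace Z),
    @SecondCountableTopology Z tZ ∧
    (∃ f : Y → X, @Continuous Y X tY _ f ∧ Surjective f) ∧
    (∃ g : Y → Z, @PerfectMap Y Z tY tZ g ∧ Surjective g)

/-- A topological space `X` is a *charming space* if there is a subset `Y` of `X` that is a
Lindelöf Σ-space in the subspace topology and such that for every open `U ⊇ Y`,
the set `X \ U` is a Lindelöf Σ-space in the subspace topology. -/
def IsCharming (X : Type u) [TopologicalSpace X] : Prop :=
  ∃ Y : Set X, IsLindelofSigma Y ∧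
    ∀ U : Set X, IsOpen U → Y ⊆ U → IsLindelofSigma ↥(Uᶜ)

/-- A *CL-charming* space: the shell `Y` can be chosen closed. -/
def IsCLCharming (X : Type u) [TopologicalSpace X] : Prop :=
  ∃ Y : Set X, IsClosed Y ∧ IsLindelofSigma Y ∧
    ∀ U : Set X, IsOpen U → Y ⊆ U → IsLindelofSigma ↥(Uᶜ)

/-- A *CO-charming* space: the shell `Y` can be chosen compact. -/
def IsCOCharming (X : Type u) [TopologicalSpace X] : Prop :=
  ∃ Y : Set X, IsCompact Y ∧ IsLindelofSigma Y ∧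
    ∀ U : Set X, IsOpen U → Y ⊆ U → IsLindelofSigma ↥(Uᶜ)

/-- A space has a *countable network* if there is a countable family `N` of subsets such that
every point in every open set `V` is contained in a member of `N` contained in `V`. -/
def HasCountableNetwork (X : Type u) [TopologicalSpace X] : Prop :=
  ∃ N : Set (Set X), N.Countable ∧
    ∀ x : X, ∀ V : Set X, IsOpen V → x ∈ V → ∃ n ∈ N, x ∈ n ∧ n ⊆ V

/-- A topological space `X` is *weak (4,4)-structured* if there exist a topological space `Y`,
a continuous surjection from `Y` onto `X`, and a perfect surjection from `Y` onto some
charming space. -/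
def IsWeak44Structured (X : Type u) [TopologicalSpace X] : Prop :=
  ∃ (Y : Type u) (tY : TopologicalSpace Y) (M : Type u) (tM : TopologicalSpace M),
    @IsCharming M tM ∧
    (∃ f : Y → X, @Continuous Y X tY _ f ∧ Surjective f) ∧
    (∃ g : Y → M, @PerfectMap Y M tY tM g ∧ Surjective g)

theorem perfectMap_iff_isProperMap {X Y : Type*} [TopologicalSpace X] [TopologicalSpace Y]
    {f : X → Y} : PerfectMap f ↔ IsProperMap f :=
  isProperMap_iff_isClosedMap_and_compact_fibers.symm

theorem PerfectMap.prodMap {X Y Z W : Type*} [TopologicalSpace X] [TopologicalSpace Y]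
    [TopologicalSpace Z] [TopologicalSpace W] {f : X → Y} {g : Z → W} (hf : PerfectMap f)
    (hg : PerfectMap g) : PerfectMap (Prod.map f g) := by
  rw [perfectMap_iff_isProperMap] at hf hg ⊢
  exact hf.prodMap hg

theorem preimage_sigmaMk_image_sigmaMap_id {ι : Type*} {X Y : ι → Type*} (g : ∀ i, X i → Y i)
    (C : Set (Σ i, X i)) (i : ι) :
    Sigma.mk i ⁻¹' (Sigma.map id g '' C) = g i '' (Sigma.mk i ⁻¹' C) := by
  ext y
  constructor
  · rintro ⟨⟨j, x⟩, hx, hxy⟩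
    obtain ⟨rfl, hxy⟩ := Sigma.mk.inj_iff.1 hxy
    exact ⟨x, hx, eq_of_heq hxy⟩
  · rintro ⟨x, hx, rfl⟩
    exact ⟨⟨i, x⟩, hx, rfl⟩

theorem PerfectMap.sigmaMap {ι : Type*} {X Y : ι → Type*} [∀ i, TopologicalSpace (X i)]
    [∀ i, TopologicalSpace (Y i)] {g : ∀ i, X i → Y i} (hg : ∀ i, PerfectMap (g i)) :
    PerfectMap (Sigma.map id g : (Σ i, X i) → Σ i, Y i) := by
  refine ⟨Continuous.sigma_map fun i => (hg i).1, fun C hC => ?_, ?_⟩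
  · refine isClosed_sigma_iff.2 fun i => ?_
    rw [preimage_sigmaMk_image_sigmaMap_id]
    exact (hg i).2.1 _ (isClosed_sigma_iff.1 hC i)
  · rintro ⟨i, y⟩
    have hfiber : Sigma.mk i '' (g i ⁻¹' {y}) = Sigma.map id g ⁻¹' {⟨i, y⟩} := by
      rw [← image_singleton]
      exact image_sigmaMk_preimage_sigmaMap injective_id g i {y}
    rw [← hfiber]
    exact ((hg i).2.2 y).image continuous_sigmaMk

namespace IsLindelofSigma

protected theorem sigma {ι : Type*} [Countable ι] {X : ι → Type u}
    [∀ i, TopologicalSpace (X i)] (hX : ∀ i, IsLindelofSigma (X i)) :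
    IsLindelofSigma (Σ i, X i) := by
  choose Y _ Z _ _ hf g hg hgs using hX
  choose f hf hfs using hf
  exact ⟨Σ i, Y i, inferInstance, Σ i, Z i, inferInstance, inferInstance,
    ⟨Sigma.map id f, Continuous.sigma_map hf, surjective_id.sigma_map hfs⟩,
    Sigma.map id g, PerfectMap.sigmaMap hg, surjective_id.sigma_map hgs⟩

variable {X Y : Type u} [TopologicalSpace X] [TopologicalSpace Y]

theorem of_secondCountableTopology [SecondCountableTopology X] : IsLindelofSigma X :=
  ⟨X, inferInstance, X, inferInstance, inferInstance, ⟨id, continuous_id, surjective_id⟩,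
    id, perfectMap_iff_isProperMap.2 isProperMap_id, surjective_id⟩

theorem of_surjective (hX : IsLindelofSigma X) {f : X → Y} (hf : Continuous f)
    (hfs : Surjective f) : IsLindelofSigma Y := by
  obtain ⟨X', _, Z, _, hZ, ⟨h, hh, hhs⟩, hg⟩ := hX
  exact ⟨X', _, Z, _, hZ, ⟨f ∘ h, hf.comp hh, hfs.comp hhs⟩, hg⟩

protected theorem prod (hX : IsLindelofSigma X) (hY : IsLindelofSigma Y) :
    IsLindelofSigma (X × Y) := by
  obtain ⟨X', _, Z, _, _, ⟨f, hf, hfs⟩, g, hg, hgs⟩ := hX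
  obtain ⟨Y', _, W, _, _, ⟨f', hf', hfs'⟩, g', hg', hgs'⟩ := hY
  exact ⟨X' × Y', inferInstance, Z × W, inferInstance, inferInstance,
    ⟨Prod.map f f', hf.prodMap hf', hfs.prodMap hfs'⟩,
    Prod.map g g', hg.prodMap hg', hgs.prodMap hgs'⟩

theorem image {S : Set X} (hS : IsLindelofSigma S) {f : X → Y} (hf : ContinuousOn f S) :
    IsLindelofSigma (f '' S) :=
  hS.of_surjective (f := S.imageFactorization f) (hf.domRestrict.subtype_mk _)
    imageFactorization_surjective

theorem setProd {S : Set X} {T : Set Y} (hS : IsLindelofSigma S) (hT : IsLindelofSigma T) :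
    IsLindelofSigma (S ×ˢ T) :=
  let e := Homeomorph.Set.prod S T
  (hS.prod hT).of_surjective e.symm.continuous e.symm.surjective

theorem iUnion {ι : Type*} [Countable ι] {S : ι → Set X} (hS : ∀ i, IsLindelofSigma (S i)) :
    IsLindelofSigma (⋃ i, S i) := by
  -- `IsLindelofSigma` lives in a single universe, so the index type is first moved into it.
  let e := (equivShrink.{u} ι).symm
  have : Countable (Shrink.{u} ι) := e.injective.countable
  rw [← e.surjective.iUnion_comp S]
  exact (IsLindelofSigma.sigma fun j => hS (e j)).of_surjective
    (f := sigmaToiUnion fun j => S (e j))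
    (continuous_sigma fun j => continuous_inclusion (subset_iUnion (fun j => S (e j)) j))
    (sigmaToiUnion_surjective _)

theorem union {S T : Set X} (hS : IsLindelofSigma S) (hT : IsLindelofSigma T) :
    IsLindelofSigma ↥(S ∪ T) := by
  rw [union_eq_iUnion]
  exact iUnion (Bool.forall_bool.2 ⟨hT, hS⟩)

end IsLindelofSigma

section OpHull

variable {G : Type u} {ι : Type*}

/-- The elements of `G` obtained from `A` by nesting the binary operations `op i` to depth at
most `n`. The operations are uncurried to match the maps `p` and `q` of a rectification. -/
def opStage (op : ι → G × G → G) (A : Set G) : ℕ → Set G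
  | 0 => A
  | n + 1 => opStage op A n ∪ ⋃ i, op i '' (opStage op A n ×ˢ opStage op A n)

/-- The subset of `G` generated by `A` under the binary operations `op i`. -/
def opHull (op : ι → G × G → G) (A : Set G) : Set G :=
  ⋃ n, opStage op A n

theorem opStage_mono (op : ι → G × G → G) (A : Set G) : Monotone (opStage op A) :=
  monotone_nat_of_le_succ fun _ => subset_union_left

theorem subset_opHull (op : ι → G × G → G) (A : Set G) : A ⊆ opHull op A :=
  subset_iUnion (opStage op A) 0

theorem op_mem_opHull {op : ι → G × G → G} {A : Set G} (i : ι) {x y : G}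
    (hx : x ∈ opHull op A) (hy : y ∈ opHull op A) : op i (x, y) ∈ opHull op A := by
  obtain ⟨m, hm⟩ := mem_iUnion.1 hx
  obtain ⟨n, hn⟩ := mem_iUnion.1 hy
  have hxy : (x, y) ∈ opStage op A (max m n) ×ˢ opStage op A (max m n) :=
    ⟨opStage_mono op A (le_max_left m n) hm, opStage_mono op A (le_max_right m n) hn⟩
  exact mem_iUnion.2 ⟨max m n + 1, .inr (mem_iUnion.2 ⟨i, mem_image_of_mem (op i) hxy⟩)⟩

variable [TopologicalSpace G] [Countable ι] {op : ι → G × G → G} {A : Set G}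

theorem IsLindelofSigma.opStage (hop : ∀ i, Continuous (op i)) (hA : IsLindelofSigma A) (n : ℕ) :
    IsLindelofSigma (opStage op A n) := by
  induction n with
  | zero => exact hA
  | succ n ih => exact ih.union (iUnion fun i => (ih.setProd ih).image (hop i).continuousOn)

theorem IsLindelofSigma.opHull (hop : ∀ i, Continuous (op i)) (hA : IsLindelofSigma A) :
    IsLindelofSigma (opHull op A) :=
  iUnion (hA.opStage hop)

end OpHull

theorem rectifiable_hull_general {G : Type u} [TopologicalSpace G] {ι : Type*} [Countable ι]
    {op : ι → G × G → G} (hop : ∀ i, Continuous (op i)) (e : G) (A : Set G) :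
    ∃ H : Set G, A ⊆ H ∧ e ∈ H ∧
      (∀ i, ∀ x ∈ H, ∀ y ∈ H, op i (x, y) ∈ H) ∧
      (IsLindelofSigma ↥A → IsLindelofSigma ↥H) :=
  have hsub : A ∪ {e} ⊆ opHull op (A ∪ {e}) := subset_opHull op (A ∪ {e})
  ⟨opHull op (A ∪ {e}), fun _ hx => hsub (.inl hx), hsub (.inr rfl),
    fun i _ hx _ hy => op_mem_opHull i hx hy,
    fun hA => (hA.union .of_secondCountableTopology).opHull hop⟩

/-- For any subset `A` of a rectifiable space `G` there is a rectifiable subspace `H ⊇ A`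
containing `e` and closed under `p` and `q`; moreover, if `A` is a Lindelöf Σ-subspace then
`H` can be chosen to be a Lindelöf Σ-subspace. -/
theorem rectifiable_hull {G : Type u} [TopologicalSpace G] [T35Space G]
    (φ : G × G ≃ₜ G × G) (e : G)
    (hπ : ∀ z : G × G, (φ z).1 = z.1)
    (hφ : ∀ x : G, φ (x, x) = (x, e))
    (p q : G × G → G)
    (hp : p = fun z => (φ.symm z).2)
    (hq : q = fun z => (φ z).2)
    (A : Set G) :
    ∃ H : Set G, A ⊆ H ∧ e ∈ H ∧
      (∀ x ∈ H, ∀ y ∈ H, p (x, y) ∈ H) ∧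
      (∀ x ∈ H, ∀ y ∈ H, q (x, y) ∈ H) ∧
      (IsLindelofSigma ↥A → IsLindelofSigma ↥H) := by
  have hop : ∀ i, Continuous (![p, q] i) := by
    rw [Fin.forall_fin_two, hp, hq]
    exact ⟨continuous_snd.comp φ.symm.continuous, continuous_snd.comp φ.continuous⟩
  obtain ⟨H, hAH, heH, hopH, hLS⟩ := rectifiable_hull_general hop e A
  exact ⟨H, hAH, heH, hopH 0, hopH 1, hLS⟩
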